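/- The maximal ω-cloud of a convex polygon P is a full circle C if and only if k = π/(π−ω) is a positive integer and P is a regular k-gon inscribed in C. -/

import Mathlib

open EuclideanGeometry Real Set
open scoped Classical

noncomputable section

abbrev Plane := EuclideanSpace ℝ (Fin 2)

/-- The unit vector in direction `θ`. -/
def unitVec (θ : ℝ) : Plane := (WithLp.equiv 2 (Fin 2 → ℝ)).symm ![Real.cos θ, Real.sin θ]

/-- The closed ray from `x` in direction `d`. -/
def ray (x d : Plane) : Set Plane := {y | ∃ t : ℝ, 0 ≤ t ∧ y = x + t • d}

/-- The closed wedge with apex `x` bounded by the rays in directions `d₁` and `d₂`. -/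
def wedgeSet (x d₁ d₂ : Plane) : Set Plane :=
  {y | ∃ s t : ℝ, 0 ≤ s ∧ 0 ≤ t ∧ y = x + s • d₁ + t • d₂}

/-- The wedge with apex `x`, arm directions `d₁`, `d₂` (unit vectors at angle `ω`),
is a minimal `ω`-wedge for `P`: it contains `P` and both arms touch `P`. -/
def IsMinWedge (P : Set Plane) (ω : ℝ) (x d₁ d₂ : Plane) : Prop :=
  ‖d₁‖ = 1 ∧ ‖d₂‖ = 1 ∧ InnerProductGeometry.angle d₁ d₂ = ω ∧
  P ⊆ wedgeSet x d₁ d₂ ∧ (P ∩ ray x d₁).Nonempty ∧ (P ∩ ray x d₂).Nonempty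

/-- The `ω`-cloud of `P`: the locus of apices of all minimal `ω`-wedges. -/
def omegaCloud (P : Set Plane) (ω : ℝ) : Set Plane := {x | ∃ d₁ d₂, IsMinWedge P ω x d₁ d₂}

/-- `V` is the vertex set of a convex polygon: at least 3 points, in strictly convex position. -/
def IsConvexPolygon (V : Finset Plane) : Prop :=
  3 ≤ V.card ∧ ∀ v ∈ V, v ∉ convexHull ℝ ((V.erase v : Finset Plane) : Set Plane)

/-- The interior angle of a convex body `P` at a boundary point `v`, defined as the
supremum of angles `∠ a v b` over `a, b ∈ P \ {v}`. -/
def interiorAngle (P : Set Plane) (v : Plane) : ℝ :=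
  sSup {θ : ℝ | ∃ a ∈ P, ∃ b ∈ P, a ≠ v ∧ b ≠ v ∧ θ = EuclideanGeometry.angle a v b}

/-- A circular arc, given by center, radius, starting angle and angular extent. -/
structure CircArc where
  center : Plane
  radius : ℝ
  start : ℝ
  delta : ℝ

/-- The (closed) point set of a circular arc. -/
def CircArc.points (A : CircArc) : Set Plane :=
  {p | ∃ θ ∈ Set.Icc A.start (A.start + A.delta), p = A.center + A.radius • unitVec θ}

/-- The relative interior of a circular arc. -/
def CircArc.intPoints (A : CircArc) : Set Plane :=
  {p | ∃ θ ∈ Set.Ioo A.start (A.start + A.delta), p = A.center + A.radius • unitVec θ}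

/-- The start point of an arc when it is traversed clockwise. -/
def CircArc.cwStart (A : CircArc) : Plane := A.center + A.radius • unitVec (A.start + A.delta)

/-- The end point of an arc when it is traversed clockwise. -/
def CircArc.cwEnd (A : CircArc) : Plane := A.center + A.radius • unitVec A.start

/-- The set of (bisector) directions of minimal `ω`-wedges of `P` with apex `x`. -/
def wedgeDirs (P : Set Plane) (ω : ℝ) (x : Plane) : Set Plane :=
  {d | ∃ d₁ d₂, IsMinWedge P ω x d₁ d₂ ∧ d = (‖d₁ + d₂‖)⁻¹ • (d₁ + d₂)}

/-- On every interior point of the arc `A`, the minimal `ω`-wedge of `P` touches `P`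
at `p` (with one arm) and `q` (with the other arm). -/
def ContactPair (P : Set Plane) (ω : ℝ) (A : CircArc) (p q : Plane) : Prop :=
  ∀ x ∈ A.intPoints, ∃ d₁ d₂, IsMinWedge P ω x d₁ d₂ ∧ p ∈ ray x d₁ ∧ q ∈ ray x d₂

/-!
Parametrize a wedge by the outer normals `unitVec a` and `unitVec (a + d)` of its arms, where
`ω = π - d`. It is a minimal `ω`-wedge of `P` exactly when both arms are supporting lines of `P`, so
the cloud consists of the intersection points of supporting lines with normals at angle `d`, and
passing to the convex hull changes nothing.

Let the cloud lie on a circle. A vertex `v` is the contact point of the first arm for an interval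
of normals, and for infinitely many of them, accumulating at one, the second arm touches the same
vertex `w`. The equation saying that the apex is on the circle is analytic in the normal, hence
holds for all normals; when the second normal is perpendicular to `w - v`, the apex is `v`, so `v`
is on the circle. Once the contact points are known to be on the circle at angles `s` and `t`, the
equation factors and says `cos (2 * a + d - s - t) = cos d` or `cos (t - s - d) = cos d`. This
forces consecutive vertices to be `2 * d` apart. Conversely, on a regular polygon with this step
the apex is the reflection of the contact vertices in the normals, which sweeps the whole circle.
-/

open scoped RealInnerProductSpace

section Trigonometry

lemma cos_lt_cos_of_mem_Ioo {x y : ℝ} (hy : 0 ≤ y) (hx : x ∈ Ioo y (2 * π - y)) :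
    cos x < cos y := by
  have hadd : 0 < sin ((y + x) / 2) :=
    sin_pos_of_pos_of_lt_pi (by linarith [hx.1]) (by linarith [hx.2])
  have hsub : 0 < sin ((x - y) / 2) :=
    sin_pos_of_pos_of_lt_pi (by linarith [hx.1]) (by linarith [hx.2])
  have hdiff : cos y - cos x = 2 * sin ((y + x) / 2) * sin ((x - y) / 2) := by
    rw [cos_sub_cos, ← neg_sub x y, neg_div, sin_neg]
    ring
  linarith [show 0 < cos y - cos x by rw [hdiff]; positivity]

lemma cos_le_cos_of_mem_Icc {x y : ℝ} (hy : 0 ≤ y) (hx : x ∈ Icc y (2 * π - y)) :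
    cos x ≤ cos y := by
  rcases hx.1.eq_or_lt with rfl | hleft
  · rfl
  rcases hx.2.eq_or_lt with rfl | hright
  · rw [cos_two_pi_sub]
  exact (cos_lt_cos_of_mem_Ioo hy ⟨hleft, hright⟩).le

lemma pos_of_natCast_mul_eq_pi {d : ℝ} {k : ℕ} (hkd : k * d = π) : 0 < k := by
  refine Nat.pos_of_ne_zero fun hk => pi_ne_zero ?_
  rw [← hkd, hk, Nat.cast_zero, zero_mul]

lemma cos_sub_int_mul_le_cos {d : ℝ} {k : ℕ} (hkd : k * d = π) {s : ℝ} (hs : |s| ≤ d) (m : ℤ) :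
    cos (s - m * (2 * d)) ≤ cos s := by
  have hk : (0 : ℤ) < k := Int.natCast_pos.2 (pos_of_natCast_mul_eq_pi hkd)
  have hperiod : cos (s - m * (2 * d)) = cos ((m % k : ℤ) * (2 * d) - s) := by
    have hm : (m : ℝ) = k * (m / k : ℤ) + (m % k : ℤ) := by
      exact_mod_cast (Int.mul_ediv_add_emod m k).symm
    rw [← cos_neg, ← cos_sub_int_mul_two_pi _ (m / k), ← hkd, hm]
    ring_nf
  rw [hperiod]
  rcases (Int.emod_nonneg m hk.ne').eq_or_lt with hzero | hpos
  · rw [← hzero, Int.cast_zero, zero_mul, zero_sub, cos_neg]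
  have hd : 0 ≤ d := (abs_nonneg s).trans hs
  have hone : (1 : ℝ) ≤ (m % k : ℤ) := by exact_mod_cast hpos
  have hlt : ((m % k : ℤ) : ℝ) + 1 ≤ k := by exact_mod_cast Int.emod_lt_of_pos m hk
  rw [← cos_abs s]
  refine cos_le_cos_of_mem_Icc (abs_nonneg s) ⟨?_, ?_⟩
  · nlinarith [le_abs_self s]
  · nlinarith [neg_abs_le s]

end Trigonometry

section UnitVec

@[simp]
lemma unitVec_apply_zero (θ : ℝ) : unitVec θ 0 = cos θ := by simp [unitVec]

@[simp]
lemma unitVec_apply_one (θ : ℝ) : unitVec θ 1 = sin θ := by simp [unitVec]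

lemma inner_unitVec_left (θ : ℝ) (z : Plane) : ⟪unitVec θ, z⟫ = z 0 * cos θ + z 1 * sin θ := by
  simp [PiLp.inner_apply, Fin.sum_univ_two]

lemma inner_unitVec_unitVec (s t : ℝ) : ⟪unitVec s, unitVec t⟫ = cos (s - t) := by
  rw [inner_unitVec_left, unitVec_apply_zero, unitVec_apply_one, cos_sub]
  ring

lemma inner_unitVec_add_smul_unitVec (a : ℝ) (c : Plane) (r t : ℝ) :
    ⟪unitVec a, c + r • unitVec t⟫ = ⟪unitVec a, c⟫ + r * cos (a - t) := by
  rw [inner_add_right, inner_smul_right, inner_unitVec_unitVec]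

@[simp]
lemma norm_unitVec (θ : ℝ) : ‖unitVec θ‖ = 1 := by
  rw [← sq_eq_sq₀ (norm_nonneg _) zero_le_one, ← real_inner_self_eq_norm_sq,
    inner_unitVec_unitVec, sub_self, cos_zero, one_pow]

lemma periodic_unitVec : Function.Periodic unitVec (2 * π) := by
  intro θ
  ext i
  fin_cases i <;> simp

lemma exists_eq_norm_smul_unitVec (z : Plane) : ∃ θ, z = ‖z‖ • unitVec θ := by
  have hnorm : ‖z‖ = ‖(⟨z 0, z 1⟩ : ℂ)‖ := by
    rw [EuclideanSpace.norm_eq, Fin.sum_univ_two, Complex.norm_eq_sqrt_sq_add_sq]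
    simp
  refine ⟨Complex.arg ⟨z 0, z 1⟩, ?_⟩
  rw [hnorm]
  ext i
  fin_cases i <;> simp

lemma mem_sphere_iff_exists_unitVec {c p : Plane} {r : ℝ} (hr : 0 ≤ r) :
    p ∈ Metric.sphere c r ↔ ∃ θ, p = c + r • unitVec θ := by
  rw [mem_sphere_iff_norm]
  constructor
  · rintro rfl
    obtain ⟨θ, hθ⟩ := exists_eq_norm_smul_unitVec (p - c)
    exact ⟨θ, by rw [← hθ, add_sub_cancel]⟩
  · rintro ⟨θ, rfl⟩
    rw [add_sub_cancel_left, norm_smul, norm_unitVec, mul_one, norm_of_nonneg hr]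

lemma inner_unitVec_add_smul_unitVec_reflect (a : ℝ) (c : Plane) (r t : ℝ) :
    ⟪unitVec a, c + r • unitVec (2 * a - t)⟫ = ⟪unitVec a, c + r • unitVec t⟫ := by
  rw [inner_unitVec_add_smul_unitVec, inner_unitVec_add_smul_unitVec, ← cos_neg (a - t)]
  ring_nf

end UnitVec

section WedgeForm

/-- The quadratic form expressing `‖z‖ ^ 2 * sin d ^ 2` through the components of `z` along two
unit vectors at angle `d`; for the apex of a minimal wedge these components are the offsets of the
two arms. -/
def wedgeForm (d X Y : ℝ) : ℝ := X ^ 2 + Y ^ 2 - 2 * X * Y * cos d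

lemma wedgeForm_inner_unitVec (a d : ℝ) (z : Plane) :
    wedgeForm d ⟪unitVec a, z⟫ ⟪unitVec (a + d), z⟫ = ‖z‖ ^ 2 * sin d ^ 2 := by
  rw [EuclideanSpace.real_norm_sq_eq, Fin.sum_univ_two]
  simp only [wedgeForm, inner_unitVec_left, cos_add, sin_add]
  have ha := sin_sq_add_cos_sq a
  have hd := sin_sq_add_cos_sq d
  grind

lemma wedgeForm_mul_cos_mul_cos (d r α β : ℝ) :
    wedgeForm d (r * cos α) (r * cos β) - r ^ 2 * sin d ^ 2 =
      r ^ 2 * ((cos (α + β) - cos d) * (cos (α - β) - cos d)) := by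
  simp only [wedgeForm, cos_add, cos_sub]
  linear_combination r ^ 2 * (sin β ^ 2 * sin_sq_add_cos_sq α +
    (1 - cos α ^ 2) * sin_sq_add_cos_sq β - sin_sq_add_cos_sq d)

lemma eq_of_inner_unitVec_eq {a d : ℝ} (hd : sin d ≠ 0) {x y : Plane}
    (h₁ : ⟪unitVec a, x⟫ = ⟪unitVec a, y⟫) (h₂ : ⟪unitVec (a + d), x⟫ = ⟪unitVec (a + d), y⟫) :
    x = y := by
  have hnorm := wedgeForm_inner_unitVec a d (x - y)
  rw [inner_sub_right, inner_sub_right, h₁, h₂, sub_self, sub_self] at hnorm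
  rw [← sub_eq_zero, ← norm_eq_zero]
  simpa [wedgeForm, hd] using hnorm.symm

lemma eq_add_smul_add_smul_iff {a d : ℝ} (hd : sin d ≠ 0) {x p : Plane} {s t : ℝ} :
    p = x + s • unitVec (a - π / 2) + t • unitVec (a + d + π / 2) ↔
      ⟪unitVec a, x⟫ - ⟪unitVec a, p⟫ = t * sin d ∧
        ⟪unitVec (a + d), x⟫ - ⟪unitVec (a + d), p⟫ = s * sin d := by
  have hcos₁ : cos (a - (a - π / 2)) = 0 := by rw [sub_sub_cancel, cos_pi_div_two]
  have hcos₂ : cos (a - (a + d + π / 2)) = -sin d := by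
    rw [← cos_neg, ← cos_add_pi_div_two]; ring_nf
  have hcos₃ : cos (a + d - (a - π / 2)) = -sin d := by
    rw [← cos_add_pi_div_two]; ring_nf
  have hcos₄ : cos (a + d - (a + d + π / 2)) = 0 := by
    rw [sub_add_cancel_left, cos_neg, cos_pi_div_two]
  have hinner₁ : ⟪unitVec a, x + s • unitVec (a - π / 2) + t • unitVec (a + d + π / 2)⟫ =
      ⟪unitVec a, x⟫ - t * sin d := by
    rw [inner_unitVec_add_smul_unitVec, inner_unitVec_add_smul_unitVec, hcos₁, hcos₂]; ring
  have hinner₂ : ⟪unitVec (a + d), x + s • unitVec (a - π / 2) + t • unitVec (a + d + π / 2)⟫ =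
      ⟪unitVec (a + d), x⟫ - s * sin d := by
    rw [inner_unitVec_add_smul_unitVec, inner_unitVec_add_smul_unitVec, hcos₃, hcos₄]; ring
  constructor
  · rintro rfl
    rw [hinner₁, hinner₂]
    constructor <;> ring
  · rintro ⟨h₁, h₂⟩
    apply eq_of_inner_unitVec_eq hd
    · rw [hinner₁]; linarith
    · rw [hinner₂]; linarith

lemma exists_inner_unitVec_eq {d : ℝ} (hd : sin d ≠ 0) (a : ℝ) (v w : Plane) :
    ∃ x, ⟪unitVec a, x⟫ = ⟪unitVec a, v⟫ ∧ ⟪unitVec (a + d), x⟫ = ⟪unitVec (a + d), w⟫ := by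
  obtain ⟨h₁, h₂⟩ := (eq_add_smul_add_smul_iff (a := a) (x := 0)
    (s := -⟪unitVec (a + d), w⟫ / sin d) (t := -⟪unitVec a, v⟫ / sin d) hd).1 rfl
  rw [div_mul_cancel₀ _ hd, inner_zero_right, zero_sub, neg_inj] at h₁ h₂
  exact ⟨_, h₁, h₂⟩

end WedgeForm

section SupportLine

/-- The line through `x` with outer normal `unitVec a` is a supporting line of `P`; `x` itself need
not lie in `P`. -/
def IsSupportLine (P : Set Plane) (a : ℝ) (x : Plane) : Prop :=
  IsGreatest ((⟪unitVec a, ·⟫) '' P) ⟪unitVec a, x⟫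

variable {P : Set Plane} {a d : ℝ} {x y : Plane}

lemma IsSupportLine.inner_le (h : IsSupportLine P a x) {p : Plane} (hp : p ∈ P) :
    ⟪unitVec a, p⟫ ≤ ⟪unitVec a, x⟫ :=
  h.2 (mem_image_of_mem _ hp)

lemma IsSupportLine.inner_eq (hx : IsSupportLine P a x) (hy : IsSupportLine P a y) :
    ⟪unitVec a, x⟫ = ⟪unitVec a, y⟫ :=
  IsGreatest.unique hx hy

lemma IsSupportLine.of_inner_eq (hx : IsSupportLine P a x)
    (h : ⟪unitVec a, y⟫ = ⟪unitVec a, x⟫) : IsSupportLine P a y := by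
  rwa [IsSupportLine, h]

lemma isSupportLine_of_mem (hx : x ∈ P) (h : ∀ p ∈ P, ⟪unitVec a, p⟫ ≤ ⟪unitVec a, x⟫) :
    IsSupportLine P a x :=
  ⟨mem_image_of_mem _ hx, forall_mem_image.2 h⟩

lemma exists_mem_isSupportLine (hfin : P.Finite) (hne : P.Nonempty) (a : ℝ) :
    ∃ v ∈ P, IsSupportLine P a v :=
  (P.exists_max_image _ hfin hne).imp fun _ h => ⟨h.1, isSupportLine_of_mem h.1 h.2⟩

lemma isGreatest_convexHull_iff {s : Set ℝ} {m : ℝ} :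
    IsGreatest (convexHull ℝ s) m ↔ IsGreatest s m := by
  constructor
  · rintro ⟨hm, hub⟩
    have hle : ∀ t ∈ s, t ≤ m := fun t ht => hub (subset_convexHull ℝ s ht)
    refine ⟨?_, hle⟩
    by_contra hms
    have hlt : s ⊆ Iio m := fun t ht => (hle t ht).lt_of_ne fun h => hms (h ▸ ht)
    exact lt_irrefl m (convexHull_min hlt (convex_Iio m) hm)
  · rintro ⟨hm, hub⟩
    exact ⟨subset_convexHull ℝ s hm, convexHull_min hub (convex_Iic m)⟩

lemma isSupportLine_convexHull :
    IsSupportLine (convexHull ℝ P) a x ↔ IsSupportLine P a x := by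
  have himage : (⟪unitVec a, ·⟫) '' convexHull ℝ P = convexHull ℝ ((⟪unitVec a, ·⟫) '' P) :=
    (innerₛₗ ℝ (unitVec a)).image_convexHull P
  rw [IsSupportLine, himage, isGreatest_convexHull_iff, IsSupportLine]

end SupportLine

section OmegaCloud

variable {P : Set Plane} {a d ω : ℝ} {x p d₁ d₂ : Plane}

lemma wedgeSet_comm (x d₁ d₂ : Plane) : wedgeSet x d₁ d₂ = wedgeSet x d₂ d₁ := by
  ext p
  simp only [wedgeSet, mem_ofPred_eq]
  grind

lemma IsMinWedge.symm (h : IsMinWedge P ω x d₁ d₂) : IsMinWedge P ω x d₂ d₁ := by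
  obtain ⟨hd₁, hd₂, hangle, hsub, hray₁, hray₂⟩ := h
  rw [InnerProductGeometry.angle_comm] at hangle
  rw [wedgeSet_comm] at hsub
  exact ⟨hd₂, hd₁, hangle, hsub, hray₂, hray₁⟩

lemma angle_unitVec_eq_iff (hω : ω ∈ Icc 0 π) {s t : ℝ} :
    InnerProductGeometry.angle (unitVec s) (unitVec t) = ω ↔ cos (s - t) = cos ω := by
  rw [← injOn_cos.eq_iff ⟨InnerProductGeometry.angle_nonneg _ _,
    InnerProductGeometry.angle_le_pi _ _⟩ hω, InnerProductGeometry.cos_angle,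
    inner_unitVec_unitVec, norm_unitVec, norm_unitVec, one_mul, div_one]

lemma exists_arms_eq_unitVec (hd : d ∈ Icc 0 π) (hd₁ : ‖d₁‖ = 1) (hd₂ : ‖d₂‖ = 1)
    (hangle : InnerProductGeometry.angle d₁ d₂ = π - d) :
    ∃ a, d₁ = unitVec (a - π / 2) ∧ d₂ = unitVec (a + d + π / 2) ∨
      d₂ = unitVec (a - π / 2) ∧ d₁ = unitVec (a + d + π / 2) := by
  obtain ⟨s, rfl⟩ : ∃ s, d₁ = unitVec s := by
    simpa [hd₁] using exists_eq_norm_smul_unitVec d₁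
  obtain ⟨t, rfl⟩ : ∃ t, d₂ = unitVec t := by
    simpa [hd₂] using exists_eq_norm_smul_unitVec d₂
  rw [angle_unitVec_eq_iff ⟨by linarith [hd.2], by linarith [hd.1]⟩, cos_eq_cos_iff] at hangle
  obtain ⟨n, hn | hn⟩ := hangle
  · refine ⟨s + π / 2, .inl ⟨by ring_nf, ?_⟩⟩
    rw [← periodic_unitVec.int_mul (1 - n) t]
    congr 1
    push_cast
    linarith
  · refine ⟨t + π / 2, .inr ⟨by ring_nf, ?_⟩⟩
    rw [← periodic_unitVec.int_mul (1 - n) s]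
    congr 1
    push_cast
    linarith

lemma exists_nonneg_eq_mul_iff {u v : ℝ} (hv : 0 < v) : (∃ t, 0 ≤ t ∧ u = t * v) ↔ 0 ≤ u := by
  constructor
  · rintro ⟨t, ht, rfl⟩
    positivity
  · exact fun hu => ⟨u / v, div_nonneg hu hv.le, (div_mul_cancel₀ u hv.ne').symm⟩

lemma mem_wedgeSet_unitVec_iff (hd : 0 < sin d) :
    p ∈ wedgeSet x (unitVec (a - π / 2)) (unitVec (a + d + π / 2)) ↔
      ⟪unitVec a, p⟫ ≤ ⟪unitVec a, x⟫ ∧ ⟪unitVec (a + d), p⟫ ≤ ⟪unitVec (a + d), x⟫ := by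
  simp only [wedgeSet, mem_ofPred_eq, eq_add_smul_add_smul_iff hd.ne']
  rw [← sub_nonneg, ← exists_nonneg_eq_mul_iff hd, ← sub_nonneg (b := ⟪unitVec (a + d), p⟫),
    ← exists_nonneg_eq_mul_iff hd]
  grind

lemma mem_ray_unitVec_sub_iff (hd : 0 < sin d) :
    p ∈ ray x (unitVec (a - π / 2)) ↔
      ⟪unitVec a, p⟫ = ⟪unitVec a, x⟫ ∧ ⟪unitVec (a + d), p⟫ ≤ ⟪unitVec (a + d), x⟫ := by
  have hdecomp (s : ℝ) :=
    eq_add_smul_add_smul_iff (a := a) (x := x) (p := p) (s := s) (t := 0) hd.ne'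
  simp only [zero_smul, add_zero, zero_mul, sub_eq_zero] at hdecomp
  rw [← sub_nonneg, ← exists_nonneg_eq_mul_iff hd]
  simp only [ray, mem_ofPred_eq, hdecomp]
  grind

lemma mem_ray_unitVec_add_iff (hd : 0 < sin d) :
    p ∈ ray x (unitVec (a + d + π / 2)) ↔
      ⟪unitVec a, p⟫ ≤ ⟪unitVec a, x⟫ ∧ ⟪unitVec (a + d), p⟫ = ⟪unitVec (a + d), x⟫ := by
  have hdecomp (t : ℝ) :=
    eq_add_smul_add_smul_iff (a := a) (x := x) (p := p) (s := 0) (t := t) hd.ne'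
  simp only [zero_smul, add_zero, zero_mul, sub_eq_zero] at hdecomp
  rw [← sub_nonneg, ← exists_nonneg_eq_mul_iff hd]
  simp only [ray, mem_ofPred_eq, hdecomp]
  grind

lemma isMinWedge_unitVec_iff (hd : d ∈ Ioo 0 π) :
    IsMinWedge P (π - d) x (unitVec (a - π / 2)) (unitVec (a + d + π / 2)) ↔
      IsSupportLine P a x ∧ IsSupportLine P (a + d) x := by
  have hsin : 0 < sin d := sin_pos_of_mem_Ioo hd
  have hangle : InnerProductGeometry.angle (unitVec (a - π / 2)) (unitVec (a + d + π / 2)) =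
      π - d := by
    rw [angle_unitVec_eq_iff ⟨by linarith [hd.2], by linarith [hd.1]⟩,
      show a - π / 2 - (a + d + π / 2) = -(d + π) by ring, cos_neg, cos_add_pi, cos_pi_sub]
  simp only [IsMinWedge, norm_unitVec, hangle, true_and, subset_def, Set.Nonempty, mem_inter_iff,
    mem_wedgeSet_unitVec_iff hsin, mem_ray_unitVec_sub_iff hsin, mem_ray_unitVec_add_iff hsin,
    IsSupportLine, IsGreatest, upperBounds, mem_image, mem_ofPred_eq]
  grind

theorem mem_omegaCloud_iff (hd : d ∈ Ioo 0 π) :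
    x ∈ omegaCloud P (π - d) ↔ ∃ a, IsSupportLine P a x ∧ IsSupportLine P (a + d) x := by
  simp only [← isMinWedge_unitVec_iff hd]
  constructor
  · rintro ⟨d₁, d₂, hwedge⟩
    obtain ⟨a, ⟨rfl, rfl⟩ | ⟨rfl, rfl⟩⟩ :=
      exists_arms_eq_unitVec (Ioo_subset_Icc_self hd) hwedge.1 hwedge.2.1 hwedge.2.2.1
    exacts [⟨a, hwedge⟩, ⟨a, hwedge.symm⟩]
  · rintro ⟨a, hwedge⟩
    exact ⟨_, _, hwedge⟩

lemma omegaCloud_convexHull (hω : ω ∈ Ioo 0 π) :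
    omegaCloud (convexHull ℝ P) ω = omegaCloud P ω := by
  obtain ⟨d, rfl⟩ : ∃ d, ω = π - d := ⟨π - ω, (sub_sub_cancel π ω).symm⟩
  have hd : d ∈ Ioo 0 π := ⟨by linarith [hω.2], by linarith [hω.1]⟩
  ext x
  simp only [mem_omegaCloud_iff hd, isSupportLine_convexHull]

end OmegaCloud

section VertexOnCircle

variable {P : Set Plane} {d r : ℝ} {c v w : Plane}

lemma exists_forall_inner_unitVec_lt {K : Set Plane} (hconv : Convex ℝ K) (hclosed : IsClosed K)
    (hv : v ∉ K) : ∃ a, ∀ p ∈ K, ⟪unitVec a, p⟫ < ⟪unitVec a, v⟫ := by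
  obtain ⟨f, u, hK, hu⟩ := geometric_hahn_banach_closed_point hconv hclosed hv
  obtain ⟨y, rfl⟩ := (InnerProductSpace.toDual ℝ Plane).surjective f
  obtain ⟨a, ha⟩ := exists_eq_norm_smul_unitVec y
  refine ⟨a, fun p hp => lt_of_mul_lt_mul_left ?_ (norm_nonneg y)⟩
  rw [← real_inner_smul_left, ← real_inner_smul_left, ← ha]
  exact (hK p hp).trans hu

lemma exists_eventually_isSupportLine (hfin : P.Finite) (hv : v ∈ P)
    (hvertex : v ∉ convexHull ℝ (P \ {v})) : ∃ a, ∀ᶠ b in nhds a, IsSupportLine P b v := by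
  obtain ⟨a, ha⟩ := exists_forall_inner_unitVec_lt (convex_convexHull ℝ _)
    (hfin.sdiff.isClosed_convexHull ℝ) hvertex
  have hcont (p : Plane) : Continuous fun b => ⟪unitVec b, p⟫ := by
    simp only [inner_unitVec_left]
    fun_prop
  have hlt : ∀ᶠ b in nhds a, ∀ p ∈ P \ {v}, ⟪unitVec b, p⟫ < ⟪unitVec b, v⟫ :=
    (Filter.eventually_all_finite hfin.sdiff).2 fun p hp =>
      (hcont p).continuousAt.eventually_lt (hcont v).continuousAt
        (ha p (subset_convexHull ℝ _ hp))
  refine ⟨a, hlt.mono fun b hb => isSupportLine_of_mem hv fun p hp => ?_⟩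
  by_cases hpv : p = v
  · rw [hpv]
  · exact (hb p ⟨hp, hpv⟩).le

lemma wedgeForm_eq_of_omegaCloud_subset_sphere (hd : d ∈ Ioo 0 π)
    (hcloud : omegaCloud P (π - d) ⊆ Metric.sphere c r) {a : ℝ} (hv : IsSupportLine P a v)
    (hw : IsSupportLine P (a + d) w) :
    wedgeForm d ⟪unitVec a, v - c⟫ ⟪unitVec (a + d), w - c⟫ = r ^ 2 * sin d ^ 2 := by
  obtain ⟨x, hxv, hxw⟩ := exists_inner_unitVec_eq (sin_pos_of_mem_Ioo hd).ne' a v w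
  have hx : x ∈ omegaCloud P (π - d) :=
    (mem_omegaCloud_iff hd).2 ⟨a, hv.of_inner_eq hxv, hw.of_inner_eq hxw⟩
  rw [inner_sub_right, inner_sub_right, ← hxv, ← hxw, ← inner_sub_right, ← inner_sub_right,
    wedgeForm_inner_unitVec, mem_sphere_iff_norm.1 (hcloud hx)]

lemma norm_sq_eq_of_forall_wedgeForm_eq (hd : sin d ≠ 0)
    (h : ∀ a, wedgeForm d ⟪unitVec a, v⟫ ⟪unitVec (a + d), w⟫ = r ^ 2 * sin d ^ 2) :
    ‖v‖ ^ 2 = r ^ 2 := by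
  obtain ⟨b, hb⟩ := exists_eq_norm_smul_unitVec (w - v)
  -- The second line passes through both points, so the two lines meet at `v`.
  have hline : ⟪unitVec (b + π / 2), w⟫ = ⟪unitVec (b + π / 2), v⟫ := by
    rw [← sub_eq_zero, ← inner_sub_right, hb, inner_smul_right, inner_unitVec_unitVec,
      add_sub_cancel_left, cos_pi_div_two, mul_zero]
  have hform := h (b + π / 2 - d)
  rw [sub_add_cancel, hline] at hform
  have hnorm := wedgeForm_inner_unitVec (b + π / 2 - d) d v
  rw [sub_add_cancel, hform] at hnorm
  exact mul_right_cancel₀ (pow_ne_zero 2 hd) hnorm.symm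

lemma mem_sphere_of_omegaCloud_subset_sphere (hfin : P.Finite) (hd : d ∈ Ioo 0 π) (hr : 0 ≤ r)
    (hcloud : omegaCloud P (π - d) ⊆ Metric.sphere c r) (hv : v ∈ P)
    (hvertex : v ∉ convexHull ℝ (P \ {v})) : v ∈ Metric.sphere c r := by
  obtain ⟨a, ha⟩ := exists_eventually_isSupportLine hfin hv hvertex
  have hcontact : ∃ᶠ b in nhdsWithin a {a}ᶜ, ∃ w ∈ P,
      IsSupportLine P b v ∧ IsSupportLine P (b + d) w :=
    ((ha.filter_mono nhdsWithin_le_nhds).mono fun b hb =>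
      (exists_mem_isSupportLine hfin ⟨v, hv⟩ (b + d)).imp fun w hw => ⟨hw.1, hb, hw.2⟩).frequently
  obtain ⟨w, -, hw⟩ := hfin.frequently_exists.1 hcontact
  have hform : (fun b => wedgeForm d ⟪unitVec b, v - c⟫ ⟪unitVec (b + d), w - c⟫) =
      fun _ => r ^ 2 * sin d ^ 2 := by
    refine AnalyticOnNhd.eq_of_frequently_eq ?_ analyticOnNhd_const
      (hw.mono fun b hb => wedgeForm_eq_of_omegaCloud_subset_sphere hd hcloud hb.1 hb.2)
    simp only [wedgeForm, inner_unitVec_left]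
    intro b _
    fun_prop
  rw [mem_sphere_iff_norm, ← sq_eq_sq₀ (norm_nonneg _) hr]
  exact norm_sq_eq_of_forall_wedgeForm_eq (sin_pos_of_mem_Ioo hd).ne' (congrFun hform)

end VertexOnCircle

section PointsOnCircle

variable {V : Set Plane} {c : Plane} {r a d s t θ : ℝ}

lemma isSupportLine_of_forall_exists_cos_le (hr : 0 ≤ r) (ht : c + r • unitVec t ∈ V)
    (h : ∀ w ∈ V, ∃ s, w = c + r • unitVec s ∧ cos (a - s) ≤ cos (a - t)) :
    IsSupportLine V a (c + r • unitVec t) := by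
  refine isSupportLine_of_mem ht fun w hw => ?_
  obtain ⟨s, rfl, hs⟩ := h w hw
  rw [inner_unitVec_add_smul_unitVec, inner_unitVec_add_smul_unitVec]
  gcongr

lemma cos_eq_cos_or_cos_eq_cos_of_isSupportLine (hr : r ≠ 0) (hd : d ∈ Ioo 0 π)
    (hcloud : omegaCloud V (π - d) ⊆ Metric.sphere c r)
    (hs : IsSupportLine V a (c + r • unitVec s))
    (ht : IsSupportLine V (a + d) (c + r • unitVec t)) :
    cos (2 * a + d - s - t) = cos d ∨ cos (t - s - d) = cos d := by
  have hform := wedgeForm_eq_of_omegaCloud_subset_sphere hd hcloud hs ht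
  rw [add_sub_cancel_left, add_sub_cancel_left, inner_smul_right, inner_smul_right,
    inner_unitVec_unitVec, inner_unitVec_unitVec, ← sub_eq_zero, wedgeForm_mul_cos_mul_cos,
    mul_eq_zero_iff_left (pow_ne_zero 2 hr), mul_eq_zero, sub_eq_zero, sub_eq_zero] at hform
  convert hform using 3 <;> ring

lemma exists_mem_Ioc_eq_add_smul_unitVec (hr : 0 ≤ r) {w : Plane} (hw : w ∈ Metric.sphere c r)
    (θ : ℝ) : ∃ τ ∈ Ioc 0 (2 * π), w = c + r • unitVec (θ + τ) := by
  obtain ⟨t, rfl⟩ := (mem_sphere_iff_exists_unitVec hr).1 hw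
  obtain ⟨n, hn, -⟩ := existsUnique_add_zsmul_mem_Ioc two_pi_pos (t - θ) 0
  rw [zsmul_eq_mul, zero_add] at hn
  refine ⟨_, hn, ?_⟩
  rw [← add_assoc, add_sub_cancel, periodic_unitVec.int_mul]

/-- The angles at which the circle with center `c` and radius `r` passes through a point of `V`. -/
def circleAngles (V : Set Plane) (c : Plane) (r : ℝ) : Set ℝ := {θ | c + r • unitVec θ ∈ V}

lemma sub_two_pi_mem_circleAngles (hθ : θ ∈ circleAngles V c r) :
    θ - 2 * π ∈ circleAngles V c r := by
  rwa [circleAngles, mem_ofPred_eq, periodic_unitVec.sub_eq]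

lemma exists_next_mem_circleAngles (hr : 0 ≤ r) (hfin : V.Finite) (hV : V.Nontrivial)
    (hsphere : V ⊆ Metric.sphere c r) (θ : ℝ) :
    ∃ τ ∈ Ioo 0 (2 * π), θ + τ ∈ circleAngles V c r ∧
      ∀ w ∈ V, ∃ s ∈ Icc τ (2 * π), w = c + r • unitVec (θ + s) := by
  have hangle : ∀ w ∈ V, ∃ τ ∈ Ioc 0 (2 * π), w = c + r • unitVec (θ + τ) :=
    fun w hw => exists_mem_Ioc_eq_add_smul_unitVec hr (hsphere hw) θ
  choose! f hf hfθ using hangle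
  obtain ⟨v, hv, hmin⟩ := V.exists_min_image f hfin hV.nonempty
  obtain ⟨w, hw, hne⟩ := hV.exists_ne (c + r • unitVec (θ + 2 * π))
  have hlt : f w < 2 * π := (hf w hw).2.lt_of_ne fun h => hne (by rw [← h, ← hfθ w hw])
  refine ⟨f v, ⟨(hf v hv).1, (hmin w hw).trans_lt hlt⟩, ?_,
    fun u hu => ⟨f u, ⟨hmin u hu, (hf u hu).2⟩, hfθ u hu⟩⟩
  rwa [circleAngles, mem_ofPred_eq, ← hfθ v hv]

lemma notMem_Ioo_of_mem_circleAngles (hr : 0 < r) (hd : d ∈ Ioo 0 π) (hfin : V.Finite)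
    (hsphere : V ⊆ Metric.sphere c r) (hcloud : omegaCloud V (π - d) ⊆ Metric.sphere c r)
    (hθ : θ ∈ circleAngles V c r) (ht : t ∈ circleAngles V c r) : t ∉ Ioo θ (θ + 2 * d) := by
  intro hθt
  have hsupp : IsSupportLine V θ (c + r • unitVec θ) := by
    refine isSupportLine_of_forall_exists_cos_le hr.le hθ fun w hw => ?_
    obtain ⟨s, rfl⟩ := (mem_sphere_iff_exists_unitVec hr.le).1 (hsphere hw)
    exact ⟨s, rfl, by simpa only [sub_self, cos_zero] using cos_le_one _⟩
  obtain ⟨w, hw, hsupp'⟩ := exists_mem_isSupportLine hfin ⟨_, hθ⟩ (θ + d)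
  obtain ⟨s, rfl⟩ := (mem_sphere_iff_exists_unitVec hr.le).1 (hsphere hw)
  have hcos : cos (θ + d - s) = cos d := by
    rcases cos_eq_cos_or_cos_eq_cos_of_isSupportLine hr.ne' hd hcloud hsupp hsupp' with h | h
    · rw [← h]
      ring_nf
    · rw [← h, ← cos_neg]
      ring_nf
  have hle := hsupp'.inner_le ht
  rw [inner_unitVec_add_smul_unitVec, inner_unitVec_add_smul_unitVec, hcos, add_le_add_iff_left,
    mul_le_mul_iff_of_pos_left hr, ← cos_abs] at hle
  have habs : |θ + d - t| < d := abs_lt.2 ⟨by linarith [hθt.2], by linarith [hθt.1]⟩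
  exact hle.not_gt (cos_lt_cos_of_mem_Ioo (abs_nonneg _) ⟨habs, by linarith [hd.2]⟩)

lemma isSupportLine_add_and_isSupportLine_sub (hr : 0 ≤ r) {τ β : ℝ} (hθ : θ ∈ circleAngles V c r)
    (hθτ : θ + τ ∈ circleAngles V c r)
    (hangles : ∀ w ∈ V, ∃ s ∈ Icc τ (2 * π), w = c + r • unitVec (θ + s))
    (hβ : β ∈ Icc 0 (τ / 2)) :
    IsSupportLine V (θ + β) (c + r • unitVec θ) ∧
      IsSupportLine V (θ + τ - β) (c + r • unitVec (θ + τ)) := by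
  constructor
  · refine isSupportLine_of_forall_exists_cos_le hr hθ fun w hw => ?_
    obtain ⟨s, hs, rfl⟩ := hangles w hw
    refine ⟨_, rfl, ?_⟩
    rw [add_sub_add_left_eq_sub, add_sub_cancel_left, ← cos_neg, neg_sub]
    exact cos_le_cos_of_mem_Icc hβ.1 ⟨by linarith [hβ.2, hs.1], by linarith [hs.2]⟩
  · refine isSupportLine_of_forall_exists_cos_le hr hθτ fun w hw => ?_
    obtain ⟨s, hs, rfl⟩ := hangles w hw
    refine ⟨_, rfl, ?_⟩
    have hs' : θ + τ - β - (θ + s) = -(s - τ + β) := by ring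
    rw [hs', sub_sub_cancel_left, cos_neg, cos_neg]
    exact cos_le_cos_of_mem_Icc hβ.1 ⟨by linarith [hs.1], by linarith [hβ.2, hs.2]⟩

lemma add_two_mul_mem_circleAngles (hr : 0 < r) (hd : d ∈ Ioo 0 π) (hfin : V.Finite)
    (hV : V.Nontrivial) (hsphere : V ⊆ Metric.sphere c r)
    (hcloud : omegaCloud V (π - d) ⊆ Metric.sphere c r) (hθ : θ ∈ circleAngles V c r) :
    θ + 2 * d ∈ circleAngles V c r := by
  obtain ⟨τ, hτ, hnext, hangles⟩ := exists_next_mem_circleAngles hr.le hfin hV hsphere θ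
  have hgap : 2 * d ≤ τ := by
    by_contra! hlt
    exact notMem_Ioo_of_mem_circleAngles hr hd hfin hsphere hcloud hθ hnext
      ⟨by linarith [hτ.1], by linarith⟩
  -- Choose the two normals symmetric about the bisector of the consecutive points.
  obtain ⟨hsupp, hsupp'⟩ := isSupportLine_add_and_isSupportLine_sub hr.le hθ hnext hangles
    (β := (τ - d) / 2) ⟨by linarith [hd.1], by linarith [hd.1]⟩
  have hdir : θ + τ - (τ - d) / 2 = θ + (τ - d) / 2 + d := by ring
  rw [hdir] at hsupp'
  have hcos : cos (τ - d) = cos d := by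
    rcases cos_eq_cos_or_cos_eq_cos_of_isSupportLine hr.ne' hd hcloud hsupp hsupp' with h | h
    · have hzero : 2 * (θ + (τ - d) / 2) + d - θ - (θ + τ) = 0 := by ring
      rw [hzero] at h
      exact absurd h.symm (cos_lt_cos_of_mem_Ioo le_rfl ⟨hd.1, by linarith [hd.2, pi_pos]⟩).ne
    · rw [← h]
      ring_nf
  rcases hgap.eq_or_lt with heq | hlt
  · rwa [heq]
  · exact absurd hcos (cos_lt_cos_of_mem_Ioo hd.1.le ⟨by linarith, by linarith [hτ.2]⟩).ne

end PointsOnCircle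

section RegularPolygon

variable {V : Set Plane} {c : Plane} {r d θ₀ : ℝ} {k : ℕ}

lemma add_nat_mul_mem {A : Set ℝ} {e t : ℝ} (hadd : ∀ t ∈ A, t + e ∈ A) (ht : t ∈ A) (n : ℕ) :
    t + n * e ∈ A := by
  induction n with
  | zero => simpa using ht
  | succ n ih =>
    convert hadd _ ih using 1
    push_cast
    ring

lemma exists_nat_add_mul_eq {A : Set ℝ} {e s t : ℝ} (he : 0 < e) (hadd : ∀ t ∈ A, t + e ∈ A)
    (hgap : ∀ t ∈ A, ∀ s ∈ A, s ∉ Ioo t (t + e)) (hs : s ∈ A) (ht : t ∈ A) (hst : s ≤ t) :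
    ∃ n : ℕ, s + n * e = t := by
  have hle : ⌊(t - s) / e⌋₊ ≤ (t - s) / e := Nat.floor_le (div_nonneg (sub_nonneg.2 hst) he.le)
  have hlt : (t - s) / e < ⌊(t - s) / e⌋₊ + 1 := Nat.lt_floor_add_one _
  rw [le_div_iff₀ he] at hle
  rw [div_lt_iff₀ he] at hlt
  refine ⟨⌊(t - s) / e⌋₊, eq_of_le_of_not_lt (by linarith) fun h => ?_⟩
  exact hgap _ (add_nat_mul_mem hadd hs _) t ht ⟨h, by linarith⟩

lemma exists_nat_mul_eq_and_eq_range {A : Set ℝ} {e p t : ℝ} (he : 0 < e) (hp : 0 < p)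
    (hadd : ∀ t ∈ A, t + e ∈ A) (hsub : ∀ t ∈ A, t - p ∈ A)
    (hgap : ∀ t ∈ A, ∀ s ∈ A, s ∉ Ioo t (t + e)) (ht : t ∈ A) :
    ∃ k : ℕ, k * e = p ∧ A = range fun n : ℤ => t + n * e := by
  obtain ⟨k, hk⟩ := exists_nat_add_mul_eq he hadd hgap (hsub t ht) ht (by linarith)
  have hkp : k * e = p := by linarith
  have hneg : ∀ s ∈ A, s + -e ∈ A := by
    obtain _ | k := k
    · simp [hp.ne] at hkp
    intro s hs
    convert add_nat_mul_mem hadd (hsub s hs) k using 1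
    rw [← hkp]
    push_cast
    ring
  refine ⟨k, hkp, Subset.antisymm (fun s hs => ?_) (range_subset_iff.2 fun n => ?_)⟩
  · rcases le_total t s with hts | hst
    · obtain ⟨n, hn⟩ := exists_nat_add_mul_eq he hadd hgap ht hs hts
      exact ⟨n, by simpa using hn⟩
    · obtain ⟨n, hn⟩ := exists_nat_add_mul_eq he hadd hgap hs ht hst
      refine ⟨-n, ?_⟩
      push_cast
      linarith
  · obtain ⟨m, rfl | rfl⟩ := n.eq_nat_or_neg
    · simpa using add_nat_mul_mem hadd ht m
    · simpa using add_nat_mul_mem hneg ht m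

/-- The points of the circle with center `c` and radius `r` at the angles `θ₀ + n * (2 * d)`,
`n : ℤ`; for `k * d = π` these are the vertices of a regular `k`-gon. -/
def regularPolygon (c : Plane) (r θ₀ d : ℝ) : Set Plane :=
  range fun n : ℤ => c + r • unitVec (θ₀ + n * (2 * d))

lemma regularPolygon_eq (hkd : k * d = π) :
    regularPolygon c r θ₀ d =
      {p | ∃ i : Fin k, p = c + r • unitVec (θ₀ + 2 * π * ((i : ℕ) : ℝ) / (k : ℝ))} := by
  have hk : 0 < k := pos_of_natCast_mul_eq_pi hkd
  have hangle (m : ℕ) : 2 * π * m / k = m * (2 * d) := by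
    rw [← hkd]
    field_simp
  simp only [hangle]
  apply Subset.antisymm
  · rintro _ ⟨n, rfl⟩
    obtain ⟨i, hi⟩ := Int.eq_ofNat_of_zero_le (Int.emod_nonneg n (Int.natCast_pos.2 hk).ne')
    have hik : i < k := by
      have := Int.emod_lt_of_pos n (Int.natCast_pos.2 hk)
      omega
    have hn : (n : ℝ) = k * (n / k : ℤ) + i := by
      exact_mod_cast hi ▸ (Int.mul_ediv_add_emod n k).symm
    have hθ : θ₀ + n * (2 * d) = θ₀ + i * (2 * d) + (n / k : ℤ) * (2 * π) := by
      rw [← hkd, hn]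
      ring
    refine ⟨⟨i, hik⟩, congrArg (c + r • ·) ?_⟩
    rw [hθ, periodic_unitVec.int_mul]
  · rintro _ ⟨i, rfl⟩
    exact ⟨i, by push_cast; rfl⟩

theorem exists_eq_regularPolygon_of_omegaCloud_subset_sphere (hr : 0 < r) (hd : d ∈ Ioo 0 π)
    (hfin : V.Finite) (hV : V.Nontrivial) (hconv : ∀ v ∈ V, v ∉ convexHull ℝ (V \ {v}))
    (hcloud : omegaCloud V (π - d) ⊆ Metric.sphere c r) :
    ∃ k : ℕ, k * d = π ∧ ∃ θ₀, V = regularPolygon c r θ₀ d := by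
  have hsphere : V ⊆ Metric.sphere c r := fun v hv =>
    mem_sphere_of_omegaCloud_subset_sphere hfin hd hr.le hcloud hv (hconv v hv)
  obtain ⟨v, hv⟩ := hV.nonempty
  obtain ⟨θ₀, rfl⟩ := (mem_sphere_iff_exists_unitVec hr.le).1 (hsphere hv)
  obtain ⟨k, hk, hrange⟩ := exists_nat_mul_eq_and_eq_range (A := circleAngles V c r)
    (mul_pos two_pos hd.1) two_pi_pos
    (fun _ => add_two_mul_mem_circleAngles hr hd hfin hV hsphere hcloud)
    (fun _ => sub_two_pi_mem_circleAngles)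
    (fun _ ht _ hs => notMem_Ioo_of_mem_circleAngles hr hd hfin hsphere hcloud ht hs) hv
  refine ⟨k, by linarith, θ₀, Subset.antisymm (fun w hw => ?_) (range_subset_iff.2 fun n => ?_)⟩
  · obtain ⟨t, rfl⟩ := (mem_sphere_iff_exists_unitVec hr.le).1 (hsphere hw)
    obtain ⟨n, rfl⟩ : t ∈ range fun n : ℤ => θ₀ + n * (2 * d) := hrange ▸ hw
    exact mem_range_self n
  · exact hrange.ge (mem_range_self n)

lemma isSupportLine_regularPolygon (hr : 0 ≤ r) (hkd : k * d = π) {a : ℝ} {n : ℤ}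
    (ha : |a - (θ₀ + n * (2 * d))| ≤ d) :
    IsSupportLine (regularPolygon c r θ₀ d) a (c + r • unitVec (θ₀ + n * (2 * d))) := by
  refine isSupportLine_of_forall_exists_cos_le hr (mem_range_self n) ?_
  rintro _ ⟨m, rfl⟩
  refine ⟨_, rfl, ?_⟩
  convert cos_sub_int_mul_le_cos hkd ha (m - n) using 2
  push_cast
  ring

lemma isSupportLine_regularPolygon_reflect (hr : 0 ≤ r) (hd : 0 ≤ d) (hkd : k * d = π) {a : ℝ}
    {n : ℤ} (ha : a - n * (2 * d) ∈ Icc θ₀ (θ₀ + d)) :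
    IsSupportLine (regularPolygon c r θ₀ d) a
        (c + r • unitVec (2 * a - (θ₀ + n * (2 * d)))) ∧
      IsSupportLine (regularPolygon c r θ₀ d) (a + d)
        (c + r • unitVec (2 * a - (θ₀ + n * (2 * d)))) := by
  constructor
  · refine (isSupportLine_regularPolygon (n := n) hr hkd ?_).of_inner_eq
      (inner_unitVec_add_smul_unitVec_reflect _ _ _ _)
    exact abs_le.2 ⟨by linarith [ha.1], by linarith [ha.2]⟩
  · have hreflect : 2 * a - (θ₀ + n * (2 * d)) =
        2 * (a + d) - (θ₀ + (n + 1 : ℤ) * (2 * d)) := by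
      push_cast
      ring
    rw [hreflect]
    refine (isSupportLine_regularPolygon hr hkd ?_).of_inner_eq
      (inner_unitVec_add_smul_unitVec_reflect _ _ _ _)
    push_cast
    exact abs_le.2 ⟨by linarith [ha.1], by linarith [ha.2]⟩

lemma exists_isSupportLine_regularPolygon_mem_sphere (hr : 0 ≤ r) (hd : 0 < d) (hkd : k * d = π)
    (a : ℝ) : ∃ y ∈ Metric.sphere c r, IsSupportLine (regularPolygon c r θ₀ d) a y ∧
      IsSupportLine (regularPolygon c r θ₀ d) (a + d) y := by
  obtain ⟨n, hn, -⟩ := existsUnique_sub_zsmul_mem_Ico (mul_pos two_pos hd) a (θ₀ - d)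
  rw [zsmul_eq_mul] at hn
  rcases le_total a (θ₀ + n * (2 * d)) with hle | hge
  · refine ⟨_, (mem_sphere_iff_exists_unitVec hr).2 ⟨θ₀ + n * (2 * d), rfl⟩,
      isSupportLine_regularPolygon hr hkd ?_, isSupportLine_regularPolygon hr hkd ?_⟩ <;>
      exact abs_le.2 ⟨by linarith [hn.1], by linarith⟩
  · exact ⟨_, (mem_sphere_iff_exists_unitVec hr).2 ⟨_, rfl⟩,
      isSupportLine_regularPolygon_reflect (n := n) hr hd.le hkd
        ⟨by linarith, by linarith [hn.2]⟩⟩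

theorem omegaCloud_regularPolygon (hr : 0 ≤ r) (hd : d ∈ Ioo 0 π) (hkd : k * d = π) :
    omegaCloud (regularPolygon c r θ₀ d) (π - d) = Metric.sphere c r := by
  ext x
  rw [mem_omegaCloud_iff hd]
  constructor
  · rintro ⟨a, hx₁, hx₂⟩
    obtain ⟨y, hy, hy₁, hy₂⟩ := exists_isSupportLine_regularPolygon_mem_sphere hr hd.1 hkd a
    rwa [eq_of_inner_unitVec_eq (sin_pos_of_mem_Ioo hd).ne' (hx₁.inner_eq hy₁) (hx₂.inner_eq hy₂)]
  · intro hx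
    obtain ⟨φ, rfl⟩ := (mem_sphere_iff_exists_unitVec hr).1 hx
    obtain ⟨n, hn, -⟩ := existsUnique_sub_zsmul_mem_Ico (mul_pos two_pos hd.1) φ θ₀
    rw [zsmul_eq_mul] at hn
    have hφ : 2 * ((φ + (θ₀ + n * (2 * d))) / 2) - (θ₀ + n * (2 * d)) = φ := by ring
    have hsupp := isSupportLine_regularPolygon_reflect (c := c) (θ₀ := θ₀) (n := n) hr hd.1.le hkd
      (a := (φ + (θ₀ + n * (2 * d))) / 2) ⟨by linarith [hn.1], by linarith [hn.2]⟩
    rw [hφ] at hsupp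
    exact ⟨_, hsupp⟩

end RegularPolygon

/-- The (maximal) `ω`-cloud of a convex polygon `P` is a full circle of center `c` and radius
`r` if and only if `k = π/(π-ω)` is an integer and `P` is a regular `k`-gon inscribed in that
circle. -/
theorem stmt_13 (V : Finset Plane) (hV : IsConvexPolygon V) (ω : ℝ) (hω : ω ∈ Set.Ioo 0 π)
    (c : Plane) (r : ℝ) (hr : 0 < r) :
    omegaCloud (convexHull ℝ (V : Set Plane)) ω = Metric.sphere c r ↔
      ∃ k : ℕ, (k : ℝ) = π / (π - ω) ∧
        ∃ θ₀ : ℝ, (V : Set Plane) =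
          {p | ∃ i : Fin k, p = c + r • unitVec (θ₀ + 2 * π * ((i : ℕ) : ℝ) / (k : ℝ))} := by
  obtain ⟨d, rfl⟩ : ∃ d, ω = π - d := ⟨π - ω, (sub_sub_cancel π ω).symm⟩
  have hd : d ∈ Ioo 0 π := ⟨by linarith [hω.2], by linarith [hω.1]⟩
  have hkd (k : ℕ) : (k : ℝ) = π / d ↔ k * d = π := eq_div_iff hd.1.ne'
  rw [omegaCloud_convexHull hω, sub_sub_cancel]
  simp only [hkd]
  constructor
  · intro hcloud
    have hnontrivial : (V : Set Plane).Nontrivial :=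
      Finset.one_lt_card_iff_nontrivial.1 (by linarith [hV.1])
    obtain ⟨k, hk, θ₀, hpoly⟩ := exists_eq_regularPolygon_of_omegaCloud_subset_sphere hr hd
      V.finite_toSet hnontrivial (by simpa only [Finset.coe_erase, Finset.mem_coe] using hV.2)
      hcloud.le
    exact ⟨k, hk, θ₀, hpoly.trans (regularPolygon_eq hk)⟩
  · rintro ⟨k, hk, θ₀, hpoly⟩
    rw [hpoly, ← regularPolygon_eq hk]
    exact omegaCloud_regularPolygon hr.le hd hk

end
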